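/- arXiv:2106.12697 — 7 statements merged into one kernel-verified Lean document; each statement's English description precedes it below -/
import Mathlib

section
/- Let A be a commutative ring such that the maximal spectrum Max(A) is a Noetherian topological space of dimension at most d−2. Then A satisfies the absolute flexible stable rank condition AFSR_d. -/
/-- The game defining absolute flexible stable rank: with `k` turns remaining and
the products `ε·c` chosen so far recorded in `acc`, Player 2 picks `c` and then
Player 1 picks a unit `ε`; Player 2 wins if eventually `final` holds. -/
def afsrPlay {A : Type*} [CommRing A] (final : List A → Prop) : ℕ → List A → Prop
  | 0, acc => final acc
  | k + 1, acc => ∃ c : A, ∀ ε : A, IsUnit ε → afsrPlay final k (acc ++ [ε * c])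

/-- The absolute flexible stable rank condition `AFSR_d`: for every row `b` of length `d`,
Player 2 can successively choose `c_1,…,c_{d-1}` (with a unit `ε_i` chosen adversarially
after each `c_i`) so that every maximal ideal containing
`⟨b_1 + ε_1 c_1 b_d, …, b_{d-1} + ε_{d-1} c_{d-1} b_d⟩` contains `⟨b_1,…,b_d⟩`. -/
def AFSR (A : Type*) [CommRing A] (d : ℕ) : Prop :=
  ∀ b : Fin d → A, ∀ _hd : 0 < d,
    afsrPlay (fun ts =>
      ∀ M : Ideal A, M.IsMaximal →
        Ideal.span {x | ∃ i : Fin (d - 1),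
          x = b ⟨i.val, by omega⟩ + ts.getD i.val 0 * b ⟨d - 1, by omega⟩} ≤ M →
        Ideal.span (Set.range b) ≤ M) (d - 1) []

open TopologicalSpace in
theorem afsr_step {A : Type*} [CommRing A] [NoetherianSpace (MaximalSpectrum A)]
    (W : Set (MaximalSpectrum A)) (hW : IsClosed W) (b e : A) :
    ∃ c : A, ∀ ε : A, IsUnit ε → ∀ Z : IrreducibleCloseds (MaximalSpectrum A),
      (∀ M ∈ Z, M ∈ W ∧ b + ε * c * e ∈ M.asIdeal) → (∃ M ∈ Z, e ∉ M.asIdeal) →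
      ∃ Z' : IrreducibleCloseds (MaximalSpectrum A), (∀ M ∈ Z', M ∈ W) ∧
        (∃ M ∈ Z', e ∉ M.asIdeal) ∧ Z < Z' := by
  classical
  obtain ⟨S, hSf, hSc, hSi, hS⟩ := NoetherianSpace.exists_finite_set_isClosed_irreducible hW
  have hx : ∀ t : Set (MaximalSpectrum A), ∃ x : MaximalSpectrum A ⊕ Unit,
      (∃ M ∈ t, e ∉ M.asIdeal) → ∃ M ∈ t, e ∉ M.asIdeal ∧ x = Sum.inl M := by
    intro t
    by_cases h : ∃ M ∈ t, e ∉ M.asIdeal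
    · obtain ⟨M, hM, he⟩ := h
      exact ⟨Sum.inl M, fun _ => ⟨M, hM, he, rfl⟩⟩
    · exact ⟨Sum.inr (), fun h' => absurd h' h⟩
  choose x hx using hx
  let T : Set (MaximalSpectrum A) := Sum.inl ⁻¹' (x '' S)
  have hT : T.Finite := (hSf.image x).preimage Sum.inl_injective.injOn
  have : Finite T := hT
  have hcop : Pairwise (Function.onFun IsCoprime (fun i : T => i.1.asIdeal)) := by
    intro i j hij
    rw [Function.onFun, Ideal.isCoprime_iff_sup_eq]
    apply i.1.isMaximal.coprime_of_ne j.1.isMaximal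
    intro h
    exact hij (Subtype.ext (MaximalSpectrum.ext h))
  obtain ⟨c, hc⟩ := Ideal.exists_forall_sub_mem_ideal hcop
    (fun i : T => if b ∈ i.1.asIdeal then 1 else 0)
  refine ⟨c, fun ε hε Z hZ hZe => ?_⟩
  obtain ⟨t, htS, ht⟩ := isIrreducible_iff_sUnion_isClosed.1 Z.isIrreducible' hSf.toFinset
    (fun z hz => hSc z (hSf.mem_toFinset.1 hz)) (by
      rw [hSf.coe_toFinset, ← hS]
      exact fun M hM => (hZ M hM).1)
  rw [hSf.mem_toFinset] at htS
  obtain ⟨M₀, hM₀, hM₀e⟩ := hZe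
  have hte : ∃ M ∈ t, e ∉ M.asIdeal := ⟨M₀, ht hM₀, hM₀e⟩
  refine ⟨⟨t, hSi t htS, hSc t htS⟩, ?_, hte, ?_⟩
  · intro M hM
    rw [hS]
    exact ⟨t, htS, hM⟩
  · obtain ⟨M, hM, he, hxM⟩ := hx t hte
    have hMT : M ∈ T := ⟨t, htS, hxM⟩
    have hcM := hc ⟨M, hMT⟩
    have hp := M.isMaximal.isPrime
    have hnot : b + ε * c * e ∉ M.asIdeal := by
      intro h
      by_cases hb : b ∈ M.asIdeal
      · simp only [hb, if_true] at hcM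
        have h1 : ε * c * e ∈ M.asIdeal := by
          have := M.asIdeal.sub_mem h hb
          simpa using this
        rcases hp.mem_or_mem h1 with h2 | h2
        · rcases hp.mem_or_mem h2 with h3 | h3
          · exact hp.ne_top (Ideal.eq_top_of_isUnit_mem _ h3 hε)
          · apply hp.ne_top
            rw [Ideal.eq_top_iff_one]
            have := M.asIdeal.sub_mem h3 hcM
            simpa using this
        · exact he h2
      · simp only [hb, if_false, sub_zero] at hcM
        apply hb
        have h1 : ε * c * e ∈ M.asIdeal :=
          M.asIdeal.mul_mem_right _ (M.asIdeal.mul_mem_left _ hcM)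
        have := M.asIdeal.sub_mem h h1
        simpa using this
    refine lt_of_le_of_ne (fun N hN => ht hN) ?_
    rintro rfl
    exact hnot (hZ M hM).2

theorem afsr_isClosed_mem {A : Type*} [CommRing A] (a : A) :
    IsClosed {M : MaximalSpectrum A | a ∈ M.asIdeal} := by
  have := (PrimeSpectrum.isClosed_zeroLocus ({a} : Set A)).preimage
    MaximalSpectrum.toPrimeSpectrum_continuous
  convert this using 1
  ext M
  simp [MaximalSpectrum.toPrimeSpectrum, PrimeSpectrum.mem_zeroLocus]

open TopologicalSpace in
theorem afsr_game {A : Type*} [CommRing A] [NoetherianSpace (MaximalSpectrum A)]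
    (b : ℕ → A) (e : A) (n : ℕ) (final : List A → Prop)
    (hfin : ∀ ts : List A, (∀ M : MaximalSpectrum A,
      (∀ i < n, b i + ts.getD i 0 * e ∈ M.asIdeal) → e ∈ M.asIdeal) → final ts) :
    ∀ (k : ℕ) (acc : List A), acc.length + k = n →
      (∀ Z : IrreducibleCloseds (MaximalSpectrum A),
        (∀ M ∈ Z, ∀ i < acc.length, b i + acc.getD i 0 * e ∈ M.asIdeal) →
        (∃ M ∈ Z, e ∉ M.asIdeal) → Order.height Z < (k : ℕ∞)) →
      afsrPlay final k acc := by
  intro k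
  induction k with
  | zero =>
    intro acc hl h
    refine hfin acc fun M hM => ?_
    by_contra he
    have := h ⟨{M}, isIrreducible_singleton, isClosed_singleton⟩ (by
      rintro N rfl i hi
      exact hM i (by omega)) ⟨M, rfl, he⟩
    simp at this
  | succ k ih =>
    intro acc hl h
    obtain ⟨c, hc⟩ := afsr_step
      {M : MaximalSpectrum A | ∀ i < acc.length, b i + acc.getD i 0 * e ∈ M.asIdeal} (by
        simp only [Set.ofPred_forall]
        exact isClosed_iInter fun i => isClosed_iInter fun _ => afsr_isClosed_mem _)
      (b acc.length) e
    refine ⟨c, fun ε hε => ih _ (by simp; omega) fun Z hZ hZe => ?_⟩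
    obtain ⟨Z', h1, h2, h3⟩ := hc ε hε Z (by
      intro M hM
      refine ⟨fun i hi => ?_, ?_⟩
      · have := hZ M hM i (by simp; omega)
        rwa [List.getD_append _ _ _ _ hi] at this
      · have := hZ M hM acc.length (by simp)
        simpa using this) hZe
    have h4 := h Z' h1 h2
    have h5 : Order.height Z < ⊤ :=
      lt_of_le_of_lt (Order.height_mono h3.le) (lt_of_lt_of_le h4 le_top)
    have h6 := Order.height_strictMono h3 h5
    refine lt_of_lt_of_le h6 ?_
    push_cast at h4
    exact Order.le_of_lt_add_one h4

/-- If the maximal spectrum of `A` is a Noetherian space of dimension at most `d − 2`,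
then `A` satisfies the absolute flexible stable rank condition `AFSR_d`. -/
theorem afsr_of_jdim_le
    (A : Type*) [CommRing A] (d : ℕ)
    (hNoeth : TopologicalSpace.NoetherianSpace (MaximalSpectrum A))
    (hdim : topologicalKrullDim (MaximalSpectrum A) + 2 ≤ (d : WithBot ℕ∞)) :
    AFSR A d := by
  intro b hd
  refine afsr_game (fun i => if h : i < d then b ⟨i, h⟩ else 0) (b ⟨d - 1, by omega⟩) (d - 1) _
    ?_ (d - 1) [] (by simp) ?_
  · intro ts hts M hM hle
    have hmem : ∀ i (hi : i < d - 1),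
        b ⟨i, by omega⟩ + ts.getD i 0 * b ⟨d - 1, by omega⟩ ∈ M :=
      fun i hi => hle (Ideal.subset_span ⟨⟨i, hi⟩, rfl⟩)
    have he : b ⟨d - 1, by omega⟩ ∈ M := by
      refine hts ⟨M, hM⟩ fun i hi => ?_
      have hi' : i < d := by omega
      simpa only [hi', dif_pos] using hmem i hi
    rw [Ideal.span_le]
    rintro _ ⟨⟨i, hi⟩, rfl⟩
    by_cases h : i < d - 1
    · have := M.sub_mem (hmem i h) (M.mul_mem_left (ts.getD i 0) he)
      simpa using this
    · obtain rfl : i = d - 1 := by omega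
      exact he
  · intro Z _ _
    have h1 : ((Order.height Z : ℕ∞) : WithBot ℕ∞) ≤ topologicalKrullDim (MaximalSpectrum A) :=
      Order.height_le_krullDim Z
    have h2 : ((Order.height Z : ℕ∞) : WithBot ℕ∞) + 2 ≤ (d : WithBot ℕ∞) :=
      le_trans (by gcongr) hdim
    have h3 : Order.height Z + 2 ≤ (d : ℕ∞) := WithBot.coe_le_coe.1 h2
    have h4 : Order.height Z ≠ ⊤ := by
      intro h
      rw [h] at h3
      simp at h3
    obtain ⟨m, hm⟩ := ENat.ne_top_iff_exists.1 h4
    rw [← hm] at h3 ⊢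
    have h5 : m + 2 ≤ d := by exact_mod_cast h3
    have h6 : m < d - 1 := by omega
    exact_mod_cast h6
end

section
/- Let A be a commutative ring and S a multiplicative subset of A such that the localization A[S^{−1}] satisfies AFSR_d. Then for every row (b_1,…,b_d) with entries in A[S^{−1}] and every s ∈ S, there exist elements c_1,…,c_{d−1} lying in the image of sA in A[S^{−1}] such that every maximal ideal of A[S^{−1}] containing the ideal ⟨b_1 + c_1 b_d, …, b_{d−1} + c_{d−1} b_d⟩ already contains the ideal ⟨b_1,…,b_d⟩. -/
theorem afsrPlay_exists {A : Type*} [CommRing A] (final : List A → Prop) (P : A → Prop)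
    (hP : ∀ c : A, ∃ ε : A, IsUnit ε ∧ P (ε * c)) :
    ∀ (k : ℕ) (acc : List A), afsrPlay final k acc →
      ∃ l : List A, l.length = k ∧ (∀ x ∈ l, P x) ∧ final (acc ++ l) := by
  intro k
  induction k with
  | zero =>
    intro acc h
    exact ⟨[], rfl, by simp, by simpa [afsrPlay] using h⟩
  | succ k ih =>
    intro acc h
    obtain ⟨c, hc⟩ := h
    obtain ⟨ε, hε, hPε⟩ := hP c
    obtain ⟨l, hl, hPl, hf⟩ := ih _ (hc ε hε)
    refine ⟨(ε * c) :: l, by simp [hl], ?_, by simpa using hf⟩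
    intro x hx
    rcases List.mem_cons.1 hx with rfl | hx
    · exact hPε
    · exact hPl x hx

/-- Using the `AFSR` condition in a localisation: if `A[S⁻¹]` satisfies `AFSR_d`, then for
any row `(b_1,…,b_d)` over `A[S⁻¹]` and any `s ∈ S` one can choose the correcting
coefficients `c_1,…,c_{d-1}` inside the image of `sA`. -/
theorem afsr_localization_coeffs_in_sA
    (A : Type*) [CommRing A] (S : Submonoid A) (d : ℕ) (hd : 0 < d)
    (hAFSR : AFSR (Localization S) d)
    (b : Fin d → Localization S) (s : A) (hs : s ∈ S) :
    ∃ c : Fin (d - 1) → Localization S,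
      (∀ i, ∃ a : A, c i = algebraMap A (Localization S) (s * a)) ∧
      ∀ M : Ideal (Localization S), M.IsMaximal →
        Ideal.span {x | ∃ i : Fin (d - 1),
          x = b ⟨i.val, by omega⟩ + c i * b ⟨d - 1, by omega⟩} ≤ M →
        Ideal.span (Set.range b) ≤ M := by
  obtain ⟨l, hl, hP, hf⟩ := afsrPlay_exists _
    (fun x => ∃ a : A, x = algebraMap A (Localization S) (s * a)) (fun c => by
      obtain ⟨⟨a, t⟩, ht⟩ := IsLocalization.surj S c
      refine ⟨algebraMap A (Localization S) (s * t), ?_, a, ?_⟩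
      · exact IsLocalization.map_units (Localization S) (⟨s * t, S.mul_mem hs t.2⟩ : S)
      · rw [map_mul, map_mul, ← ht]
        ring) (d - 1) [] (hAFSR b hd)
  refine ⟨fun i => l.getD i.val 0, ?_, ?_⟩
  · intro i
    have hi : i.val < l.length := by rw [hl]; exact i.2
    apply hP
    beta_reduce
    rw [List.getD_eq_getElem _ _ hi]
    exact List.getElem_mem hi
  · exact hf
end

section
/- Let C be a commutative ring and let f ∈ C[x_1,…,x_n] be a lexicographically monic polynomial. Then there exists an invertible change of variables, i.e. a C-algebra automorphism φ of C[x_1,…,x_n] (explicitly given by x_i ↦ y_i + y_n^{K^{n−i}} for i = 1,…,n−1 and x_n ↦ y_n, for any K > deg f), such that φ(f), regarded as a polynomial in x_n with coefficients in C[x_1,…,x_{n−1}], is monic. -/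
/-- A multivariate polynomial is lexicographically monic if the coefficient at the
lexicographically largest occurring monomial equals `1` (variables with smaller index
are more significant). -/
def LexMonic {C : Type*} [CommRing C] {n : ℕ} (f : MvPolynomial (Fin n) C) : Prop :=
  ∃ d : Fin n →₀ ℕ, f.coeff d = 1 ∧ ∀ e : Fin n →₀ ℕ, toLex d < toLex e → f.coeff e = 0

/-- Regard a polynomial in `x_1, …, x_{n+1}` as a polynomial in the last variable `x_{n+1}`
with coefficients in `C[x_1,…,x_n]`. -/
noncomputable def asPolyInLast (C : Type*) [CommRing C] (n : ℕ) :
    MvPolynomial (Fin (n + 1)) C ≃ₐ[C] Polynomial (MvPolynomial (Fin n) C) :=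
  (MvPolynomial.renameEquiv C (finRotate (n + 1))).trans (MvPolynomial.finSuccEquiv C n)

theorem aux_bound (K : ℕ) : ∀ (n : ℕ) (e : Fin n → ℕ), (∀ i, e i < K) →
    ∑ i, e i * K ^ (n - 1 - (i : ℕ)) < K ^ n
  | 0, e, _ => by simp
  | n + 1, e, h => by
    rw [Fin.sum_univ_succ]
    have ih := aux_bound K n (fun i => e i.succ) (fun i => h _)
    have h2 : ∀ i : Fin n, n + 1 - 1 - ((i.succ : Fin (n+1)) : ℕ) = n - 1 - (i : ℕ) := by
      intro i; simp; omega
    simp only [h2]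
    have h0 := h 0
    have : (e 0 + 1) * K ^ n ≤ K * K ^ n := Nat.mul_le_mul_right _ h0
    simp only [Fin.val_zero, Nat.add_sub_cancel, Nat.sub_zero]
    rw [pow_succ]
    nlinarith

theorem aux_lex (K : ℕ) : ∀ (n : ℕ) (e d : Fin n → ℕ), (∀ i, e i < K) → (m : Fin n) →
    (∀ j < m, e j = d j) → e m < d m →
    ∑ i, e i * K ^ (n - 1 - (i : ℕ)) < ∑ i, d i * K ^ (n - 1 - (i : ℕ))
  | 0, e, d, _, m, _, _ => m.elim0
  | n + 1, e, d, h, m, hj, hm => by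
    rw [Fin.sum_univ_succ, Fin.sum_univ_succ]
    have h2 : ∀ i : Fin n, n + 1 - 1 - ((i.succ : Fin (n+1)) : ℕ) = n - 1 - (i : ℕ) := by
      intro i; simp; omega
    simp only [h2]
    simp only [Fin.val_zero, Nat.add_sub_cancel, Nat.sub_zero]
    induction m using Fin.cases with
    | zero =>
      have ih := aux_bound K n (fun i => e i.succ) (fun i => h _)
      have : (e 0 + 1) * K ^ n ≤ d 0 * K ^ n := Nat.mul_le_mul_right _ hm
      have h3 : 0 ≤ ∑ i : Fin n, d i.succ * K ^ (n - 1 - (i : ℕ)) := Nat.zero_le _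
      nlinarith
    | succ m =>
      have ih := aux_lex K n (fun i => e i.succ) (fun i => d i.succ) (fun i => h _) m
        (fun j hjm => hj _ (Fin.succ_lt_succ_iff.2 hjm)) hm
      rw [hj 0 (Fin.succ_pos _)]
      exact Nat.add_lt_add_left ih _

/-- The change of variables. -/
noncomputable def auxHom (C : Type*) [CommRing C] (n : ℕ) (w : Fin (n + 1) → ℕ) (c : C) :
    MvPolynomial (Fin (n + 1)) C →ₐ[C] MvPolynomial (Fin (n + 1)) C :=
  MvPolynomial.aeval (fun i => if i = Fin.last n then MvPolynomial.X i
    else MvPolynomial.X i + MvPolynomial.C c * MvPolynomial.X (Fin.last n) ^ w i)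

theorem auxHom_comp (C : Type*) [CommRing C] (n : ℕ) (w : Fin (n + 1) → ℕ) (a b : C)
    (h : a + b = 0) :
    (auxHom C n w a).comp (auxHom C n w b) = AlgHom.id C _ := by
  apply MvPolynomial.algHom_ext
  intro i
  by_cases hi : i = Fin.last n
  · subst hi; simp [auxHom]
  · have : (MvPolynomial.C a + MvPolynomial.C b : MvPolynomial (Fin (n + 1)) C) = 0 := by
      rw [← map_add, h, map_zero]
    simp only [auxHom, AlgHom.comp_apply, MvPolynomial.aeval_X, hi, if_false, map_add, map_mul,
      map_pow, if_true, MvPolynomial.aeval_C, MvPolynomial.algebraMap_eq, AlgHom.id_apply]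
    linear_combination (MvPolynomial.X (Fin.last n) ^ w i) * this

theorem asPoly_monic (C : Type*) [CommRing C] [Nontrivial C] (n : ℕ) (w : Fin (n + 1) → ℕ)
    (hw : w (Fin.last n) = 1) (hpos : ∀ i, 0 < w i) (i : Fin (n + 1)) :
    (asPolyInLast C n (auxHom C n w 1 (MvPolynomial.X i))).Monic ∧
    (asPolyInLast C n (auxHom C n w 1 (MvPolynomial.X i))).natDegree = w i := by
  have hl : asPolyInLast C n (MvPolynomial.X (Fin.last n)) = Polynomial.X := by
    simp [asPolyInLast, finRotate_last, MvPolynomial.finSuccEquiv_X_zero]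
  induction i using Fin.lastCases with
  | last => simp [auxHom, hl, hw, Polynomial.monic_X]
  | cast i =>
    have hc : asPolyInLast C n (MvPolynomial.X i.castSucc) =
        Polynomial.C (MvPolynomial.X i) := by
      have : finRotate (n + 1) i.castSucc = i.succ := by
        rw [finRotate_apply]; simp
      simp only [asPolyInLast, AlgEquiv.trans_apply, MvPolynomial.renameEquiv_apply,
        MvPolynomial.rename_X, this, MvPolynomial.finSuccEquiv_X_succ]
    have he : asPolyInLast C n (auxHom C n w 1 (MvPolynomial.X i.castSucc)) =
        Polynomial.X ^ w i.castSucc + Polynomial.C (MvPolynomial.X i) := by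
      simp only [auxHom, MvPolynomial.aeval_X, (Fin.castSucc_lt_last i).ne, if_false, map_add,
        map_mul, map_pow, hl, hc, map_one, one_mul]
      rw [add_comm]
    rw [he]
    exact ⟨Polynomial.monic_X_pow_add_C _ (hpos _).ne', Polynomial.natDegree_X_pow_add_C⟩

theorem asPoly_monomial (C : Type*) [CommRing C] [Nontrivial C] (n : ℕ) (w : Fin (n + 1) → ℕ)
    (hw : w (Fin.last n) = 1) (hpos : ∀ i, 0 < w i) (e : Fin (n + 1) →₀ ℕ) :
    (asPolyInLast C n (auxHom C n w 1 (MvPolynomial.monomial e 1))).Monic ∧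
    (asPolyInLast C n (auxHom C n w 1 (MvPolynomial.monomial e 1))).natDegree
      = ∑ i, e i * w i := by
  have hm := asPoly_monic C n w hw hpos
  rw [MvPolynomial.monomial_eq, map_one, one_mul, Finsupp.prod_fintype _ _ (by simp)]
  simp only [map_prod, map_pow]
  refine ⟨Polynomial.monic_prod_of_monic _ _ fun i _ => (hm i).1.pow _, ?_⟩
  rw [Polynomial.natDegree_prod_of_monic _ _ fun i _ => (hm i).1.pow _]
  exact Finset.sum_congr rfl fun i _ => by rw [(hm i).1.natDegree_pow, (hm i).2]

/-- Normalisation: for a lexicographically monic `f ∈ C[x_1,…,x_{n+1}]` there is an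
invertible change of variables (a `C`-algebra automorphism of the polynomial ring)
after which `f`, regarded as a polynomial in the last variable with coefficients in
`C[x_1,…,x_n]`, is monic. -/
theorem lexMonic_becomes_monic_after_change_of_variables
    (C : Type*) [CommRing C] (n : ℕ)
    (f : MvPolynomial (Fin (n + 1)) C) (hf : LexMonic f) :
    ∃ φ : MvPolynomial (Fin (n + 1)) C ≃ₐ[C] MvPolynomial (Fin (n + 1)) C,
      (asPolyInLast C n (φ f)).Monic := by
  rcases subsingleton_or_nontrivial C with hC | hC
  · exact ⟨AlgEquiv.refl, Polynomial.monic_of_subsingleton _⟩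
  obtain ⟨d, hd, hlt⟩ := hf
  set K := f.totalDegree + 1 with hK
  set w : Fin (n + 1) → ℕ := fun i => K ^ (n + 1 - 1 - (i : ℕ)) with hwdef
  have hw : w (Fin.last n) = 1 := by simp [hwdef]
  have hpos : ∀ i, 0 < w i := fun i => by positivity
  refine ⟨AlgEquiv.ofAlgHom (auxHom C n w 1) (auxHom C n w (-1))
    (auxHom_comp C n w _ _ (by simp)) (auxHom_comp C n w _ _ (by simp)), ?_⟩
  change (asPolyInLast C n (auxHom C n w 1 f)).Monic
  have hmon := asPoly_monomial C n w hw hpos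
  have hds : d ∈ f.support := by rw [MvPolynomial.mem_support_iff, hd]; exact one_ne_zero
  have hf' : asPolyInLast C n (auxHom C n w 1 f) =
      asPolyInLast C n (auxHom C n w 1 (MvPolynomial.monomial d 1)) +
      ∑ e ∈ f.support.erase d, f.coeff e •
        asPolyInLast C n (auxHom C n w 1 (MvPolynomial.monomial e 1)) := by
    conv_lhs => rw [f.as_sum, ← Finset.add_sum_erase _ _ hds, hd]
    simp only [map_add, map_sum]
    congr 1
    refine Finset.sum_congr rfl fun e _ => ?_
    rw [← map_smul, ← map_smul, MvPolynomial.smul_monomial, smul_eq_mul, mul_one]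
  rw [hf']
  refine (hmon d).1.add_of_left ?_
  rw [Polynomial.degree_eq_natDegree (hmon d).1.ne_zero, (hmon d).2]
  refine (Polynomial.degree_sum_le _ _).trans_lt ?_
  rw [Finset.sup_lt_iff (WithBot.bot_lt_coe _)]
  intro e he
  obtain ⟨hne, hes⟩ := Finset.mem_erase.1 he
  refine (Polynomial.degree_smul_le _ _).trans_lt ?_
  rw [Polynomial.degree_eq_natDegree (hmon e).1.ne_zero, (hmon e).2, Nat.cast_lt]
  have hed : toLex e < toLex d := by
    rcases lt_trichotomy (toLex e) (toLex d) with h | h | h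
    · exact h
    · exact absurd (toLex.injective h) hne
    · exact absurd (hlt e h) (MvPolynomial.mem_support_iff.1 hes)
  obtain ⟨m, hj, hm⟩ := hed
  refine aux_lex K (n + 1) e d (fun i => ?_) m hj hm
  exact Nat.lt_succ_of_le ((MvPolynomial.monomial_le_degreeOf i hes).trans
    (MvPolynomial.degreeOf_le_totalDegree f i))
end

section
/- Let C be a commutative Noetherian ring, A = C[x_1,…,x_n], and I an ideal of A with height hgt_A(I) ≥ dim(C) + 1. Then I contains a lexicographically monic polynomial. -/
/-- The height of an ideal: the infimum of heights of primes containing it. -/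
noncomputable def idealHeight {A : Type*} [CommRing A] (I : Ideal A) : ℕ∞ :=
  ⨅ (P : PrimeSpectrum A) (_ : I ≤ P.asIdeal), Order.height P

open Polynomial Ideal IsLocalization in
lemma lexAux_height_le_max {R : Type*} [CommRing R] [IsNoetherianRing R]
    (p : Ideal R) [p.IsMaximal] (P : Ideal R[X])
    [P.IsPrime] [P.LiesOver p] : P.height ≤ p.height + 1 := by
  let _ : Field (R ⧸ p) := Quotient.field p
  refine (height_le_height_add_of_liesOver p P).trans ?_
  gcongr
  let e : (R[X] ⧸ (p.map (algebraMap R R[X]))) ≃+* (R ⧸ p)[X] :=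
    (polynomialQuotientEquivQuotientPolynomial p).symm
  have hp : (P.map (Ideal.Quotient.mk <| p.map (algebraMap R R[X]))).IsPrime := by
    refine Ideal.map_isPrime_of_surjective Quotient.mk_surjective ?_
    rw [mk_ker, LiesOver.over (P := P) (p := p)]
    exact map_comap_le
  rw [← e.height_map <| P.map (Ideal.Quotient.mk <| p.map (algebraMap R R[X]))]
  have : (Ideal.map e <| P.map (Ideal.Quotient.mk <| p.map (algebraMap R R[X]))).IsPrime :=
    map_isPrime_of_equiv e
  have h1 := Ideal.height_le_ringKrullDim_of_isPrime
    (I := Ideal.map e <| P.map (Ideal.Quotient.mk <| p.map (algebraMap R R[X])))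
  have h2 : ringKrullDim (R ⧸ p)[X] ≤ ((1 : ℕ∞) : WithBot ℕ∞) :=
    (IsPrincipalIdealRing.ringKrullDim_eq_one _ (Polynomial.not_isField (R ⧸ p))).le
  exact WithBot.coe_le_coe.mp (h1.trans h2)

open Polynomial Ideal IsLocalization in
attribute [local instance] Polynomial.algebra Polynomial.isLocalization in
lemma lexAux_height_le {R : Type*} [CommRing R] [IsNoetherianRing R] (p : Ideal R)
    (P : Ideal R[X]) [P.IsPrime] [P.LiesOver p] :
    P.height ≤ p.height + 1 := by
  have : p.IsPrime := by rw [P.over_def p]; infer_instance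
  let Rₚ := Localization.AtPrime p
  set p' : Ideal Rₚ := p.map (algebraMap R Rₚ) with p'_def
  have : p'.IsMaximal := by
    rw [p'_def, Localization.AtPrime.map_eq_maximalIdeal]
    exact IsLocalRing.maximalIdeal.isMaximal Rₚ
  let P' : Ideal Rₚ[X] := P.map (algebraMap R[X] Rₚ[X])
  have disj : Disjoint (p.primeCompl.map C : Set R[X]) P := by
    refine Set.disjoint_left.mpr fun a ⟨b, hb⟩ ha ↦ hb.1 ?_
    rwa [SetLike.mem_coe, LiesOver.over (P := P) (p := p), mem_comap, algebraMap_eq, hb.2]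
  have : P'.IsPrime := isPrime_of_isPrime_disjoint (p.primeCompl.map C) _ P ‹_› disj
  have : P'.LiesOver p' := liesOver_of_isPrime_of_disjoint p.primeCompl _ _ disj
  have eq1 : p.height = p'.height := by
    rw [height_map_of_disjoint p.primeCompl]
    exact Disjoint.symm <| Set.disjoint_left.mpr fun _ a b ↦ b a
  have eq2 : P.height = P'.height := by
    rw [height_map_of_disjoint (Submonoid.map C <| p.primeCompl) _ disj]
  rw [eq1, eq2]
  apply lexAux_height_le_max p' P'

open Polynomial Ideal in
lemma lexAux_exists_prime {R : Type*} [CommRing R] (I : Ideal R[X]) (q : Ideal R) [q.IsPrime]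
    (h : I.leadingCoeff ≤ q) :
    ∃ P : Ideal R[X], P.IsPrime ∧ I ≤ P ∧ P.leadingCoeff ≤ q := by
  let S : Submonoid R[X] :=
    { carrier := {f | f.leadingCoeff ∉ q}
      one_mem' := by
        have : Nontrivial R := (Submodule.nontrivial_iff R).mp ⟨q, ⊤, IsPrime.ne_top'⟩
        simpa using (Ideal.ne_top_iff_one q).mp IsPrime.ne_top'
      mul_mem' := by
        intro f g hf hg
        have hfg : f.leadingCoeff * g.leadingCoeff ∉ q := fun h ↦
          (IsPrime.mem_or_mem ‹q.IsPrime› h).elim hf hg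
        have h0 : f.leadingCoeff * g.leadingCoeff ≠ 0 := fun h ↦ hfg (h ▸ q.zero_mem)
        change (f * g).leadingCoeff ∉ q
        rwa [leadingCoeff_mul' h0] }
  obtain ⟨P, hP, hIP, hd⟩ := Ideal.exists_le_prime_disjoint (I := I) S
    (Set.disjoint_left.mpr fun f hf hS ↦ hS (h ((I.mem_leadingCoeff _).2 ⟨f, hf, rfl⟩)))
  refine ⟨P, hP, hIP, fun x hx ↦ ?_⟩
  obtain ⟨f, hf, rfl⟩ := (P.mem_leadingCoeff x).1 hx
  by_contra hq
  exact Set.disjoint_left.mp hd hf hq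

open Polynomial Ideal in
lemma lexAux_le_map {R : Type*} [CommRing R] (P : Ideal R[X]) (p : Ideal R)
    (hp : p.map C ≤ P) (h : P.leadingCoeff ≤ p) : P ≤ p.map C := by
  intro f
  induction hn : f.natDegree using Nat.strong_induction_on generalizing f with
  | _ n ih =>
    intro hf
    have hl : f.leadingCoeff ∈ p := h ((P.mem_leadingCoeff _).2 ⟨f, hf, rfl⟩)
    have hm : C f.leadingCoeff * X ^ f.natDegree ∈ p.map C :=
      Ideal.mul_mem_right _ _ (Ideal.mem_map_of_mem C hl)
    by_cases h0 : f.natDegree = 0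
    · rw [eq_C_of_natDegree_eq_zero h0]
      rw [Polynomial.leadingCoeff, h0] at hl
      exact Ideal.mem_map_of_mem C hl
    · have he : f.eraseLead ∈ P := by
        rw [← self_sub_C_mul_X_pow]
        exact P.sub_mem hf (hp hm)
      have := ih _ (by have := eraseLead_natDegree_le f; omega) rfl he
      rw [← eraseLead_add_C_mul_X_pow f]
      exact Ideal.add_mem _ this hm

open Polynomial Ideal in
lemma lexAux_height {R : Type*} [CommRing R] [IsNoetherianRing R] (P : Ideal R[X]) [P.IsPrime]
    (q : Ideal R) [q.IsPrime] (h : P.leadingCoeff ≤ q) : P.height ≤ q.height := by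
  have hlo : P.LiesOver (P.under R) := inferInstance
  have hle : P.under R ≤ P.leadingCoeff := fun x hx ↦
    (P.mem_leadingCoeff x).2 ⟨C x, hx, leadingCoeff_C x⟩
  have hm : (P.under R).map C ≤ P := map_comap_le
  rcases (hle.trans h).eq_or_lt with heq | hlt
  · have hP : P = (P.under R).map C :=
      le_antisymm (lexAux_le_map P _ hm (heq ▸ h)) hm
    rw [← heq]
    refine (height_le_height_add_of_liesOver (P.under R) P).trans ?_
    have h0 : P.map (Ideal.Quotient.mk ((P.under R).map (algebraMap R R[X]))) = ⊥ := by
      rw [Ideal.map_eq_bot_iff_le_ker, mk_ker]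
      exact hP.le
    have : Nontrivial (R[X] ⧸ (P.under R).map (algebraMap R R[X])) :=
      Ideal.Quotient.nontrivial_iff.mpr fun ht ↦
        IsPrime.ne_top ‹P.IsPrime› (hP.trans ht)
    rw [h0, height_bot, add_zero]
  · exact (lexAux_height_le (P.under R) P).trans (height_add_one_le_of_lt_of_isPrime hlt)

lemma lexAux_main (C : Type*) [CommRing C] [IsNoetherianRing C] (n : ℕ) :
    ∀ (I : Ideal (MvPolynomial (Fin n) C)),
    (∀ P : Ideal (MvPolynomial (Fin n) C), P.IsPrime → I ≤ P →
      ringKrullDim C + 1 ≤ (P.height : WithBot ℕ∞)) →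
    ∃ f ∈ I, LexMonic f := by
  induction n with
  | zero =>
    intro I hI
    have : I = ⊤ := by
      by_contra hne
      obtain ⟨M, hM, hIM⟩ := Ideal.exists_le_maximal I hne
      have h1 := hI M hM.isPrime hIM
      have h2 := Ideal.height_le_ringKrullDim_of_ne_top hM.ne_top
      rw [ringKrullDim_eq_of_ringEquiv
        (MvPolynomial.isEmptyRingEquiv C (Fin 0))] at h2
      have h3 : M.height ≠ ⊤ := Ideal.height_ne_top hM.ne_top
      have h4 : (M.height : WithBot ℕ∞) + 1 ≤ M.height := (add_le_add_left h2 1).trans h1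
      have h5 : M.height + 1 ≤ M.height := by exact_mod_cast h4
      exact absurd h5 (not_le.mpr ((ENat.lt_add_one_iff h3).mpr le_rfl))
    subst this
    refine ⟨1, trivial, 0, by simp, fun e he ↦ ?_⟩
    rw [Subsingleton.elim e 0] at he
    exact absurd he (lt_irrefl _)
  | succ n ih =>
    intro I hI
    let e := (MvPolynomial.finSuccEquiv C n).toRingEquiv
    let J := I.comap e.symm
    obtain ⟨g, hg, d, hd1, hd2⟩ := ih J.leadingCoeff (by
      intro q hq hJq
      obtain ⟨P, hP, hJP, hPq⟩ := lexAux_exists_prime J q hJq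
      have h1 := hI (P.comap e) inferInstance (by
        intro f hf
        refine hJP ?_
        change e.symm (e f) ∈ I
        simpa using hf)
      rw [RingEquiv.height_comap] at h1
      exact h1.trans (WithBot.coe_le_coe.mpr (lexAux_height P q hPq)))
    obtain ⟨F, hF, hFg⟩ := (J.mem_leadingCoeff g).1 hg
    have key : ∀ (m : Fin n →₀ ℕ) (i : ℕ), (e.symm F).coeff (m.cons i) = (F.coeff i).coeff m := by
      intro m i
      rw [← MvPolynomial.finSuccEquiv_coeff_coeff]
      congr 2
      exact e.apply_symm_apply F
    refine ⟨e.symm F, hF, d.cons F.natDegree, ?_, fun b hb ↦ ?_⟩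
    · rw [key]; change F.leadingCoeff.coeff d = 1
      rw [hFg, hd1]
    · rw [← Finsupp.cons_tail b, key]
      obtain ⟨i, hi1, hi2⟩ := Finsupp.Lex.lt_iff.mp hb
      simp only [ofLex_toLex] at hi1 hi2
      induction i using Fin.cases with
      | zero =>
        rw [Finsupp.cons_zero] at hi2
        rw [Polynomial.coeff_eq_zero_of_natDegree_lt hi2, MvPolynomial.coeff_zero]
      | succ i =>
        have h0 := hi1 0 (Fin.succ_pos i)
        rw [Finsupp.cons_zero] at h0
        rw [← h0]
        change F.leadingCoeff.coeff _ = 0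
        rw [hFg]
        refine hd2 _ (Finsupp.Lex.lt_iff.mpr ⟨i, fun j hj ↦ ?_, ?_⟩)
        · have := hi1 j.succ (Fin.succ_lt_succ_iff.mpr hj)
          rwa [Finsupp.cons_succ] at this
        · rwa [Finsupp.cons_succ] at hi2

/-- An ideal of `C[x_1,…,x_n]` of height at least `dim C + 1` contains a lexicographically
monic polynomial. -/
theorem exists_lexMonic_of_height_ge
    (C : Type*) [CommRing C] [IsNoetherianRing C] (n : ℕ)
    (I : Ideal (MvPolynomial (Fin n) C))
    (hI : ringKrullDim C + 1 ≤ (idealHeight I : WithBot ℕ∞)) :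
    ∃ f ∈ I, LexMonic f := by
  refine lexAux_main C n I fun P hP hIP ↦ hI.trans (WithBot.coe_le_coe.mpr ?_)
  refine (iInf₂_le (⟨P, hP⟩ : PrimeSpectrum _) hIP).trans ?_
  rw [← PrimeSpectrum.height_eq_orderHeight]
end

section
/- Let R be a commutative ring and r ≥ 2. Let b^+ = (b_1,…,b_r)^t ∈ R^r be a unimodular column and let b^− = (b_{−r},…,b_{−1})^t ∈ R^r be a column such that Σ_{i=1}^r b_i b_{−i} = 0. Then there exists a matrix M ∈ Θ(r,R) such that b^− = M b^+. -/
open Matrix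

/-- `Θ(r,R)`: `r × r` matrices that are antisymmetric with respect to the antidiagonal
and have zeroes on the antidiagonal. -/
def Theta (r : ℕ) (R : Type*) [CommRing R] : Set (Matrix (Fin r) (Fin r) R) :=
  {M | (∀ i j : Fin r, M ⟨r - 1 - j.val, by omega⟩ ⟨r - 1 - i.val, by omega⟩ = - M i j) ∧
    ∀ i : Fin r, M i ⟨r - 1 - i.val, by omega⟩ = 0}

/-- If `b⁺ = (b_1,…,b_r)ᵗ` is unimodular and `b⁻ = (b_{-r},…,b_{-1})ᵗ` satisfies
`∑ b_i b_{-i} = 0`, then `b⁻ = M b⁺` for some `M ∈ Θ(r,R)`. -/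
theorem exists_theta_of_unimodular
    (R : Type*) [CommRing R] (r : ℕ) (hr : 2 ≤ r)
    (bp bm : Fin r → R)
    (hu : Ideal.span (Set.range bp) = ⊤)
    (hiso : ∑ i : Fin r, bp i * bm ⟨r - 1 - i.val, by omega⟩ = 0) :
    ∃ M ∈ Theta r R, M.mulVec bp = bm := by
  have h1 : (1 : R) ∈ Ideal.span (Set.range bp) := by rw [hu]; trivial
  obtain ⟨c, hc⟩ := Ideal.mem_span_range_iff_exists_fun.1 h1
  have hrr : ∀ i : Fin r, (⟨r - 1 - (r - 1 - i.val), by omega⟩ : Fin r) = i := by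
    intro i
    apply Fin.ext
    show r - 1 - (r - 1 - i.val) = i.val
    omega
  refine ⟨Matrix.of fun i j => bm i * c j
    - c ⟨r - 1 - i.val, by omega⟩ * bm ⟨r - 1 - j.val, by omega⟩, ⟨?_, ?_⟩, ?_⟩
  · intro i j
    simp only [Matrix.of_apply, hrr]
    ring
  · intro i
    simp only [Matrix.of_apply, hrr]
    ring
  · funext i
    simp only [Matrix.mulVec, dotProduct, Matrix.of_apply]
    calc _ = ∑ j : Fin r, (bm i * (c j * bp j) - c ⟨r - 1 - i.val, by omega⟩ *
            (bp j * bm ⟨r - 1 - j.val, by omega⟩)) :=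
          Finset.sum_congr rfl fun j _ => by ring
      _ = bm i := by
          rw [Finset.sum_sub_distrib, ← Finset.mul_sum, ← Finset.mul_sum, hc, hiso]
          ring
end

section
/- For every r ≥ 2 there exists k̃ ∈ ℕ such that for every commutative ring R, every pair of columns b^+ = (b_1,…,b_r)^t ∈ R^r and b^− = (b_{−r},…,b_{−1})^t ∈ R^r with Σ_{i=1}^r b_i b_{−i} = 0, and every element s ∈ ⟨b_1,…,b_r⟩ ⊴ R, there exists a matrix M ∈ Θ(r,R) such that s^{k̃} b^− = M b^+. -/
open Matrix

/-- A uniform exponent `k̃`, depending only on `r`: for any commutative ring `R`,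
columns `b⁺`, `b⁻` with `∑ b_i b_{-i} = 0` and any `s ∈ ⟨b_1,…,b_r⟩`, one has
`s^k̃ b⁻ = M b⁺` for some `M ∈ Θ(r,R)`. -/
theorem exists_uniform_exponent_theta
    (r : ℕ) (hr : 2 ≤ r) :
    ∃ k : ℕ, ∀ (R : Type*) [CommRing R], ∀ bp bm : Fin r → R, ∀ s : R,
      (∑ i : Fin r, bp i * bm ⟨r - 1 - i.val, by omega⟩) = 0 →
      s ∈ Ideal.span (Set.range bp) →
      ∃ M ∈ Theta r R, M.mulVec bp = fun i => s ^ k * bm i := by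
  refine ⟨1, ?_⟩
  intro R _ bp bm s h hs
  obtain ⟨c, hc⟩ := (Ideal.mem_span_range_iff_exists_fun).1 hs
  have key : ∀ i : Fin r, (⟨r - 1 - (r - 1 - i.val), by omega⟩ : Fin r) = i := by
    intro i
    ext
    simp only
    omega
  refine ⟨Matrix.of fun i j => bm i * c j - c ⟨r - 1 - i.val, by omega⟩ *
    bm ⟨r - 1 - j.val, by omega⟩, ⟨?_, ?_⟩, ?_⟩
  · intro i j
    simp only [Matrix.of_apply, key]
    ring
  · intro i
    simp only [Matrix.of_apply, key]
    ring
  · funext i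
    simp only [Matrix.mulVec, dotProduct, Matrix.of_apply]
    have e : ∀ j : Fin r, (bm i * c j - c ⟨r - 1 - i.val, by omega⟩ *
        bm ⟨r - 1 - j.val, by omega⟩) * bp j = bm i * (c j * bp j) -
        c ⟨r - 1 - i.val, by omega⟩ * (bp j * bm ⟨r - 1 - j.val, by omega⟩) := by
      intro j
      ring
    rw [Finset.sum_congr rfl (fun j _ => e j), Finset.sum_sub_distrib, ← Finset.mul_sum,
      ← Finset.mul_sum, h, hc]
    ring
end

section
/- Let R be a commutative Noetherian ring, s ∈ R, and r ≥ 2. Then there exists k ∈ ℕ such that for every column b^+ = (b_1,…,b_r)^t ∈ R^r with s ∈ ⟨b_1,…,b_r⟩ and every column b^− = (b_{−r},…,b_{−1})^t ∈ R^r such that Σ_{i=1}^r b_i b_{−i} = 0 and every entry of b^− is divisible by s^k, there exists a matrix M ∈ Θ(r,R) with b^− = M b^+. -/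
open Matrix

/-- Over a Noetherian ring: there is `k` (depending on `R`, `s`, `r`) such that whenever
`s ∈ ⟨b_1,…,b_r⟩`, `∑ b_i b_{-i} = 0` and all entries of `b⁻` are divisible by `s^k`,
one has `b⁻ = M b⁺` for some `M ∈ Θ(r,R)`. -/
theorem exists_theta_of_divisible
    (R : Type*) [CommRing R] [IsNoetherianRing R] (s : R) (r : ℕ) (hr : 2 ≤ r) :
    ∃ k : ℕ, ∀ bp bm : Fin r → R,
      s ∈ Ideal.span (Set.range bp) →
      (∑ i : Fin r, bp i * bm ⟨r - 1 - i.val, by omega⟩) = 0 →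
      (∀ i, s ^ k ∣ bm i) →
      ∃ M ∈ Theta r R, M.mulVec bp = bm := by
  let f : ℕ →o Submodule R R :=
    { toFun := fun n => LinearMap.ker (LinearMap.lsmul R R (s ^ n))
      monotone' := by
        intro a b hab x hx
        simp only [LinearMap.mem_ker, LinearMap.lsmul_apply, smul_eq_mul] at hx ⊢
        obtain ⟨c, rfl⟩ := Nat.exists_eq_add_of_le hab
        rw [pow_add, mul_right_comm, hx, zero_mul] }
  obtain ⟨N, hN⟩ := monotone_stabilizes_iff_noetherian.mpr
    (inferInstance : IsNoetherian R R) f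
  have key : ∀ x : R, s ^ (N + 1) * x = 0 → s ^ N * x = 0 := by
    intro x hx
    have h1 : x ∈ f (N + 1) := by
      change x ∈ LinearMap.ker (LinearMap.lsmul R R (s ^ (N + 1)))
      simpa [LinearMap.mem_ker] using hx
    rw [← hN (N + 1) (Nat.le_succ N)] at h1
    change x ∈ LinearMap.ker (LinearMap.lsmul R R (s ^ N)) at h1
    simpa [LinearMap.mem_ker] using h1
  refine ⟨N + 1, ?_⟩
  intro bp bm hs h0 hd
  choose d hd using hd
  obtain ⟨a, ha⟩ := (Ideal.mem_span_range_iff_exists_fun).1 hs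
  let ρ : Fin r → Fin r := fun i => ⟨r - 1 - i.val, by omega⟩
  have hρ : ∀ i, ρ (ρ i) = i := by
    intro i
    apply Fin.ext
    simp only [ρ]
    omega
  have h0' : ∑ i, bp i * bm (ρ i) = 0 := h0
  have h1 : s ^ N * ∑ i, bp i * d (ρ i) = 0 := by
    apply key
    rw [← h0', Finset.mul_sum]
    refine Finset.sum_congr rfl fun i _ => ?_
    rw [hd (ρ i)]
    ring
  let M : Matrix (Fin r) (Fin r) R :=
    fun i j => s ^ N * d i * a j - a (ρ i) * (s ^ N * d (ρ j))
  refine ⟨M, ⟨?_, ?_⟩, ?_⟩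
  · intro i j
    change M (ρ j) (ρ i) = - M i j
    simp only [M, hρ]
    ring
  · intro i
    change M i (ρ i) = 0
    simp only [M, hρ]
    ring
  · funext i
    have h2 : (M.mulVec bp) i = s ^ N * d i * (∑ j, a j * bp j)
        - a (ρ i) * (s ^ N * ∑ j, bp j * d (ρ j)) := by
      simp only [Matrix.mulVec, dotProduct, M, Finset.mul_sum]
      rw [← Finset.sum_sub_distrib]
      refine Finset.sum_congr rfl fun j _ => ?_
      ring
    rw [h2, h1, ha, hd i]
    ring
end
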